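/- arXiv:1112.5134 — 4 statements merged into one kernel-verified Lean document; each statement's English description precedes it below -/
import Mathlib

section
/- Let G be a connected graph with a cut vertex v and let G = H₁ ∨ H₂ be a corresponding decomposition. Then the map Div(H₁) ⊕ Div(H₂) → Div(G), (D₁, D₂) ↦ D₁ + D₂, is a surjective group homomorphism whose kernel is the infinite cyclic group generated by (v, −v); it restricts to an isomorphism Prin(H₁) ⊕ Prin(H₂) ≅ Prin(G), and it induces an exact sequence 0 → ℤ → Jac(H₁) ⊕ Jac(H₂) → Jac(G) → 0. -/
/-- A finite multigraph: vertices `V`, edges `E`, each edge has an (arbitrarily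
ordered) pair of endpoints.  Loops are edges whose two endpoints coincide. -/
structure Multigraph where
  V : Type
  E : Type
  [decV : DecidableEq V]
  [fintV : Fintype V]
  [decE : DecidableEq E]
  [fintE : Fintype E]
  ends : E → V × V

attribute [instance] Multigraph.decV Multigraph.fintV Multigraph.decE Multigraph.fintE

namespace Multigraph

variable (G : Multigraph)

/-- Two vertices are adjacent if some edge joins them. -/
def Adj (v w : G.V) : Prop := ∃ e : G.E, G.ends e = (v, w) ∨ G.ends e = (w, v)

/-- A multigraph is connected if it is nonempty and any two vertices are joined by a walk. -/
def Connected : Prop := Nonempty G.V ∧ ∀ v w : G.V, Relation.ReflTransGen G.Adj v w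

/-- The number of edges joining `v` and `w`. -/
def numEdges (v w : G.V) : ℕ :=
  (Finset.univ.filter fun e : G.E => G.ends e = (v, w) ∨ G.ends e = (w, v)).card

/-- The number of loops based at `v`. -/
def numLoops (v : G.V) : ℕ :=
  (Finset.univ.filter fun e : G.E => G.ends e = (v, v)).card

/-- The valency of `v` (loops count twice). -/
def valency (v : G.V) : ℕ :=
  ∑ e : G.E, ((if (G.ends e).1 = v then 1 else 0) + (if (G.ends e).2 = v then 1 else 0))

/-- The intersection product on vertices: `(v·w)` is the number of edges joining `v` and
`w` when `v ≠ w`, and `(v·v) = -val(v) + 2 loop(v)`. -/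
def inter (v w : G.V) : ℤ :=
  if v = w then -(G.valency v : ℤ) + 2 * (G.numLoops v : ℤ) else (G.numEdges v w : ℤ)

/-- The principal divisor `T_v = Σ_w (v·w) w`. -/
def T (v : G.V) : G.V → ℤ := fun w => G.inter v w

/-- The group of principal divisors, generated by the `T_v`. -/
def Prin : AddSubgroup (G.V → ℤ) := AddSubgroup.closure (Set.range G.T)

/-- The Jacobian group `Div(G)/Prin(G)`. -/
abbrev Jac := (G.V → ℤ) ⧸ G.Prin

/-- A divisor is effective if all its coefficients are nonnegative. -/
def Effective {α : Type} (D : α → ℤ) : Prop := ∀ v, 0 ≤ D v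

/-- The degree of a divisor. -/
def degree {α : Type} [Fintype α] (D : α → ℤ) : ℤ := ∑ v, D v

/-- The Baker–Norine rank of a divisor: `-1` if no effective divisor is linearly
equivalent to `D`, and otherwise the largest `k ≥ 0` such that for every effective
divisor `E` of degree `k` some effective divisor is linearly equivalent to `D - E`. -/
noncomputable def rank (D : G.V → ℤ) : ℤ :=
  sSup {r : ℤ | r = -1 ∨ (0 ≤ r ∧ ∀ E : G.V → ℤ, Effective E → degree E = r →
      ∃ F : G.V → ℤ, Effective F ∧ D - E - F ∈ G.Prin)}

/-- An edge is a loop if its two endpoints coincide. -/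
def IsLoop (e : G.E) : Prop := (G.ends e).1 = (G.ends e).2

/-- The refinement of `G` obtained by inserting `n e` new vertices in the interior of
each edge `e` (subdividing `e` into `n e + 1` edges). -/
def subdivide (n : G.E → ℕ) : Multigraph where
  V := G.V ⊕ (Σ e : G.E, Fin (n e))
  E := Σ e : G.E, Fin (n e + 1)
  ends := fun x =>
    (if h : (x.2 : ℕ) = 0 then Sum.inl (G.ends x.1).1
        else Sum.inr ⟨x.1, ⟨(x.2 : ℕ) - 1, by have := x.2.isLt; omega⟩⟩,
     if h : (x.2 : ℕ) = n x.1 then Sum.inl (G.ends x.1).2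
        else Sum.inr ⟨x.1, ⟨(x.2 : ℕ), by have := x.2.isLt; omega⟩⟩)

/-- The natural map `σ* : Div(G) → Div(G̃)` to a refinement, extending a divisor by
zero on the new vertices. -/
def subdivMap (n : G.E → ℕ) (D : G.V → ℤ) : (G.subdivide n).V → ℤ := Sum.elim D 0

/-- `Ĝ`: the loopless refinement obtained by inserting one new vertex in the interior of
every loop-edge. -/
def hat : Multigraph := G.subdivide fun e => if (G.ends e).1 = (G.ends e).2 then 1 else 0

/-- The rank `r#_G(D) := r_{Ĝ}(σ* D)`. -/
noncomputable def rankSharp (D : G.V → ℤ) : ℤ :=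
  G.hat.rank (G.subdivMap (fun e => if (G.ends e).1 = (G.ends e).2 then 1 else 0) D)

/-- A multigraph is loopless if no edge is a loop. -/
def Loopless : Prop := ∀ e : G.E, (G.ends e).1 ≠ (G.ends e).2

/-- The genus (first Betti number) `g = |E| - |V| + 1` of a connected graph. -/
def genus : ℤ := (Fintype.card G.E : ℤ) - (Fintype.card G.V : ℤ) + 1

/-- The canonical divisor `K#_G = Σ_v (val(v) - 2) v`. -/
def canonical : G.V → ℤ := fun v => (G.valency v : ℤ) - 2

/-- The loopless graph obtained from `G` by removing all loop-edges. -/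
def removeLoops : Multigraph where
  V := G.V
  E := {e : G.E // (G.ends e).1 ≠ (G.ends e).2}
  ends := fun e => G.ends e.1

/-- The virtual graph `G^ω` of a weighted graph `(G, ω)`: attach `ω v` loops at each
vertex `v`. -/
def virt (w : G.V → ℕ) : Multigraph where
  V := G.V
  E := G.E ⊕ (Σ v : G.V, Fin (w v))
  ends := Sum.elim G.ends fun p => (p.1, p.1)

/-- The rank of a divisor on the weighted graph `(G, ω)`: `r_{(G,ω)}(D) := r#_{G^ω}(D)`. -/
noncomputable def rankW (w : G.V → ℕ) (D : G.V → ℤ) : ℤ := (G.virt w).rankSharp D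

/-- The canonical divisor of the weighted graph `(G, ω)`. -/
def canonicalW (w : G.V → ℕ) : G.V → ℤ := fun v => (G.valency v : ℤ) + 2 * (w v : ℤ) - 2

/-- The genus of the weighted graph `(G, ω)`: `b₁(G) + Σ_v ω(v)`. -/
def genusW (w : G.V → ℕ) : ℤ := G.genus + ∑ v, (w v : ℤ)

/-- The rose `R_g`: one vertex and `g` loop-edges. -/
def rose (g : ℕ) : Multigraph where
  V := Unit
  E := Fin g
  ends := fun _ => ((), ())

/-- The subgraph of `G` determined by a set of vertices and a set of edges with
endpoints among them. -/
def subgraph (Vs : Finset G.V) (Es : Finset G.E)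
    (h : ∀ e ∈ Es, (G.ends e).1 ∈ Vs ∧ (G.ends e).2 ∈ Vs) : Multigraph where
  V := {x : G.V // x ∈ Vs}
  E := {e : G.E // e ∈ Es}
  ends := fun e => (⟨(G.ends e.1).1, (h e.1 e.2).1⟩, ⟨(G.ends e.1).2, (h e.1 e.2).2⟩)

/-- Extension of a divisor on a subgraph by zero: `ι_* : Div(H) → Div(G)`. -/
def iota (Vs : Finset G.V) (D : {x : G.V // x ∈ Vs} → ℤ) : G.V → ℤ :=
  fun x => if h : x ∈ Vs then D ⟨x, h⟩ else 0

end Multigraph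

namespace Multigraph

/-- A decomposition `G = H₁ ∨ H₂` of `G` associated to a cut vertex `v`:  `H₁`, `H₂` are
connected subgraphs with `V(H₁) ∩ V(H₂) = {v}`, `E(H₁) ∩ E(H₂) = ∅`, covering `G`. -/
structure Wedge (G : Multigraph) where
  v : G.V
  V1 : Finset G.V
  V2 : Finset G.V
  hv1 : v ∈ V1
  hv2 : v ∈ V2
  E1 : Finset G.E
  E2 : Finset G.E
  cover_V : V1 ∪ V2 = Finset.univ
  inter_V : V1 ∩ V2 = {v}
  cover_E : E1 ∪ E2 = Finset.univ
  disj_E : E1 ∩ E2 = ∅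
  ends1 : ∀ e ∈ E1, (G.ends e).1 ∈ V1 ∧ (G.ends e).2 ∈ V1
  ends2 : ∀ e ∈ E2, (G.ends e).1 ∈ V2 ∧ (G.ends e).2 ∈ V2
  conn1 : (G.subgraph V1 E1 ends1).Connected
  conn2 : (G.subgraph V2 E2 ends2).Connected

/-- The first subgraph `H₁` of a wedge decomposition. -/
def Wedge.H1 {G : Multigraph} (W : G.Wedge) : Multigraph := G.subgraph W.V1 W.E1 W.ends1

/-- The second subgraph `H₂` of a wedge decomposition. -/
def Wedge.H2 {G : Multigraph} (W : G.Wedge) : Multigraph := G.subgraph W.V2 W.E2 W.ends2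

variable (G : Multigraph)

/-- The divisor `div(f)` of an integer-valued function `f` on the vertices
(loops contribute zero). -/
def divOf (f : G.V → ℤ) : G.V → ℤ := fun v =>
  ∑ e : G.E, ((if (G.ends e).1 = v then f v - f (G.ends e).2 else 0)
            + (if (G.ends e).2 = v then f v - f (G.ends e).1 else 0))

/-- An isomorphism of multigraphs (edges may be matched with either orientation). -/
structure Iso (G H : Multigraph) where
  vEquiv : G.V ≃ H.V
  eEquiv : G.E ≃ H.E
  compat : ∀ e : G.E,
    H.ends (eEquiv e) = (vEquiv (G.ends e).1, vEquiv (G.ends e).2) ∨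
    H.ends (eEquiv e) = (vEquiv (G.ends e).2, vEquiv (G.ends e).1)

end Multigraph

namespace Multigraph

/-- boundary coefficient of an edge -/
def bd (G : Multigraph) (e : G.E) (u : G.V) : ℤ :=
  (if (G.ends e).1 = u then 1 else 0) - (if (G.ends e).2 = u then 1 else 0)

theorem T_eq (G : Multigraph) (u w : G.V) : G.T u w = -∑ e : G.E, G.bd e u * G.bd e w := by
  unfold T inter
  rw [← Finset.sum_neg_distrib]
  split_ifs with h
  · subst h
    unfold valency numLoops
    rw [Finset.card_filter]
    push_cast
    rw [Finset.mul_sum, ← Finset.sum_neg_distrib, ← Finset.sum_add_distrib]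
    refine Finset.sum_congr rfl fun e _ => ?_
    unfold bd
    rcases hh : G.ends e with ⟨a, b⟩
    simp only [Prod.mk.injEq]
    by_cases h1 : a = u <;> by_cases h2 : b = u <;> simp [h1, h2]
  · unfold numEdges
    rw [Finset.card_filter]
    push_cast
    refine Finset.sum_congr rfl fun e _ => ?_
    unfold bd
    rcases hh : G.ends e with ⟨a, b⟩
    simp only [Prod.mk.injEq]
    by_cases h1 : a = u <;> by_cases h2 : b = u <;> by_cases h3 : a = w <;> by_cases h4 : b = w <;>
      first
      | (exfalso; apply h; first | exact h1.symm.trans h3 | exact h2.symm.trans h4)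
      | simp [h1, h2, h3, h4, h, Ne.symm h]

theorem sum_bd (G : Multigraph) (e : G.E) : ∑ u, G.bd e u = 0 := by
  simp [bd, Finset.sum_sub_distrib]

theorem sum_T (G : Multigraph) : ∑ u, G.T u = 0 := by
  funext w
  simp only [Finset.sum_apply, T_eq, Finset.sum_neg_distrib, Pi.zero_apply]
  rw [Finset.sum_comm]
  simp [← Finset.sum_mul, sum_bd]

theorem degree_T (G : Multigraph) (u : G.V) : ∑ w, G.T u w = 0 := by
  simp only [T_eq, Finset.sum_neg_distrib]
  rw [Finset.sum_comm]
  simp [← Finset.mul_sum, sum_bd]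

theorem degree_Prin (G : Multigraph) (D : G.V → ℤ) (h : D ∈ G.Prin) : ∑ w, D w = 0 := by
  unfold Prin at h
  induction h using AddSubgroup.closure_induction with
  | mem x hx => obtain ⟨u, rfl⟩ := hx; exact G.degree_T u
  | zero => simp
  | add x y _ _ hx hy => simp [Finset.sum_add_distrib, hx, hy]
  | neg x _ hx => simp [hx]

theorem iota_T (G : Multigraph) (Vs : Finset G.V) (Es : Finset G.E)
    (h : ∀ e ∈ Es, (G.ends e).1 ∈ Vs ∧ (G.ends e).2 ∈ Vs) (u : G.V) (hu : u ∈ Vs) (w : G.V) :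
    G.iota Vs ((G.subgraph Vs Es h).T ⟨u, hu⟩) w = -∑ e ∈ Es, G.bd e u * G.bd e w := by
  unfold iota
  split_ifs with hw
  · refine ((G.subgraph Vs Es h).T_eq _ _).trans ?_
    rw [← Finset.sum_coe_sort Es]
    refine congrArg Neg.neg ?_
    refine Finset.sum_congr rfl fun e _ => ?_
    simp [bd, subgraph, Subtype.ext_iff]
  · rw [eq_comm, neg_eq_zero]
    refine Finset.sum_eq_zero fun e he => ?_
    have h1 : (G.ends e).1 ≠ w := fun h' => hw (h' ▸ (h e he).1)
    have h2 : (G.ends e).2 ≠ w := fun h' => hw (h' ▸ (h e he).2)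
    simp [bd, h1, h2]

/-- extension by zero as a homomorphism -/
def iotaHom (G : Multigraph) (Vs : Finset G.V) : ({x : G.V // x ∈ Vs} → ℤ) →+ (G.V → ℤ) where
  toFun := G.iota Vs
  map_zero' := by funext x; simp [iota]
  map_add' a b := by funext x; by_cases hx : x ∈ Vs <;> simp [iota, hx]

theorem bd_zero (G : Multigraph) (Vs : Finset G.V) (Es : Finset G.E)
    (h : ∀ e ∈ Es, (G.ends e).1 ∈ Vs ∧ (G.ends e).2 ∈ Vs) (u : G.V) (hu : u ∉ Vs) (e : G.E)
    (he : e ∈ Es) : G.bd e u = 0 := by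
  have h1 : (G.ends e).1 ≠ u := fun h' => hu (h' ▸ (h e he).1)
  have h2 : (G.ends e).2 ≠ u := fun h' => hu (h' ▸ (h e he).2)
  simp [bd, h1, h2]

/-- A subgraph such that all vertices but one only meet edges of the subgraph. -/
theorem iota_Prin (G : Multigraph) (Vs : Finset G.V) (Es : Finset G.E)
    (h : ∀ e ∈ Es, (G.ends e).1 ∈ Vs ∧ (G.ends e).2 ∈ Vs) (v : G.V) (hv : v ∈ Vs)
    (H : ∀ u ∈ Vs, u ≠ v → ∀ e ∉ Es, G.bd e u = 0)
    (D : {x : G.V // x ∈ Vs} → ℤ) (hD : D ∈ (G.subgraph Vs Es h).Prin) :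
    G.iota Vs D ∈ G.Prin := by
  have key : ∀ u : {x : G.V // x ∈ Vs}, u ≠ ⟨v, hv⟩ →
      G.iotaHom Vs ((G.subgraph Vs Es h).T u) ∈ G.Prin := by
    rintro ⟨u, hu⟩ hne
    have : G.iotaHom Vs ((G.subgraph Vs Es h).T ⟨u, hu⟩) = G.T u := by
      funext w
      refine (G.iota_T Vs Es h u hu w).trans ?_
      rw [T_eq]
      congr 1
      refine Finset.sum_subset (Finset.subset_univ _) fun e _ he => ?_
      rw [H u hu (fun h' => hne (Subtype.ext h')) e he, zero_mul]
    rw [this]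
    exact AddSubgroup.subset_closure ⟨u, rfl⟩
  have all : ∀ u : {x : G.V // x ∈ Vs}, G.iotaHom Vs ((G.subgraph Vs Es h).T u) ∈ G.Prin := by
    intro u
    by_cases hu : u = ⟨v, hv⟩
    · subst hu
      have h0 := (G.subgraph Vs Es h).sum_T
      have h0 := add_eq_zero_iff_eq_neg.1 ((Finset.add_sum_erase _ (G.subgraph Vs Es h).T
        (Finset.mem_univ (⟨v, hv⟩ : (G.subgraph Vs Es h).V))).trans h0)
      let P : AddSubgroup ((G.subgraph Vs Es h).V → ℤ) := AddSubgroup.comap (G.iotaHom Vs) G.Prin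
      have h2 : (G.subgraph Vs Es h).T ⟨v, hv⟩ ∈ P := by
        rw [h0]
        exact P.neg_mem (P.sum_mem fun u hu => key u (Finset.ne_of_mem_erase hu))
      exact h2
    · exact key u hu
  have : (G.subgraph Vs Es h).Prin ≤ AddSubgroup.comap (G.iotaHom Vs) G.Prin := by
    refine (AddSubgroup.closure_le _).2 ?_
    rintro _ ⟨u, rfl⟩
    exact all u
  exact this hD

end Multigraph

open Multigraph in
/-- For a connected graph `G` with a cut-vertex decomposition
`G = H₁ ∨ H₂`, the sum map `Div(H₁) ⊕ Div(H₂) → Div(G)` is a surjective homomorphism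
with kernel the infinite cyclic group generated by `(v, -v)`; it restricts to an
isomorphism `Prin(H₁) ⊕ Prin(H₂) ≅ Prin(G)` and induces an exact sequence
`0 → ℤ → Jac(H₁) ⊕ Jac(H₂) → Jac(G) → 0`. -/
theorem wedge_decomposition_of_divisors (G : Multigraph) (hG : G.Connected) (W : G.Wedge)
    (phi : ((W.H1.V → ℤ) × (W.H2.V → ℤ)) →+ (G.V → ℤ))
    (hphi : ∀ p : (W.H1.V → ℤ) × (W.H2.V → ℤ), phi p = G.iota W.V1 p.1 + G.iota W.V2 p.2)
    (d1 : W.H1.V → ℤ) (hd1 : d1 = fun x => if x = (⟨W.v, W.hv1⟩ : W.H1.V) then 1 else 0)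
    (d2 : W.H2.V → ℤ) (hd2 : d2 = fun x => if x = (⟨W.v, W.hv2⟩ : W.H2.V) then 1 else 0) :
    Function.Surjective phi ∧
    phi.ker = AddSubgroup.zmultiples ((d1, -d2) : (W.H1.V → ℤ) × (W.H2.V → ℤ)) ∧
    Function.Injective (fun n : ℤ => n • ((d1, -d2) : (W.H1.V → ℤ) × (W.H2.V → ℤ))) ∧
    AddSubgroup.map phi ((W.H1.Prin).prod W.H2.Prin) = G.Prin ∧
    (∀ p ∈ (W.H1.Prin).prod W.H2.Prin, phi p = 0 → p = 0) ∧
    (∀ psi : (W.H1.Jac × W.H2.Jac) →+ G.Jac,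
      (∀ (D1 : W.H1.V → ℤ) (D2 : W.H2.V → ℤ),
          psi (QuotientAddGroup.mk D1, QuotientAddGroup.mk D2)
            = QuotientAddGroup.mk (phi (D1, D2))) →
      Function.Surjective psi ∧
      ∀ alpha : ℤ →+ W.H1.Jac × W.H2.Jac,
        alpha 1 = (QuotientAddGroup.mk d1, QuotientAddGroup.mk (-d2)) →
        Function.Injective alpha ∧ alpha.range = psi.ker) := by
  classical
  have hcov : ∀ x, x ∈ W.V1 ∨ x ∈ W.V2 := fun x => by
    have := Finset.mem_univ x
    rw [← W.cover_V] at this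
    exact Finset.mem_union.1 this
  have hint : ∀ x, x ∈ W.V1 → x ∈ W.V2 → x = W.v := fun x h1 h2 => by
    have : x ∈ W.V1 ∩ W.V2 := Finset.mem_inter.2 ⟨h1, h2⟩
    rw [W.inter_V] at this
    exact Finset.mem_singleton.1 this
  have hcovE : ∀ x, x ∈ W.E1 ∨ x ∈ W.E2 := fun x => by
    have := Finset.mem_univ x
    rw [← W.cover_E] at this
    exact Finset.mem_union.1 this
  have hd1v : d1 ⟨W.v, W.hv1⟩ = 1 := by rw [hd1]; exact if_pos rfl
  have hd2v : d2 ⟨W.v, W.hv2⟩ = 1 := by rw [hd2]; exact if_pos rfl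
  have hd1n : ∀ x (hx : x ∈ W.V1), x ≠ W.v → d1 ⟨x, hx⟩ = 0 := by
    intro x hx hne; rw [hd1]; exact if_neg fun h => hne (congrArg Subtype.val h)
  have hd2n : ∀ x (hx : x ∈ W.V2), x ≠ W.v → d2 ⟨x, hx⟩ = 0 := by
    intro x hx hne; rw [hd2]; exact if_neg fun h => hne (congrArg Subtype.val h)
  have hdeg1 : ∑ w, d1 w = 1 := by
    rw [hd1]
    exact (Finset.sum_ite_eq' Finset.univ (⟨W.v, W.hv1⟩ : W.H1.V) (fun _ => (1 : ℤ))).trans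
      (if_pos (Finset.mem_univ _))
  -- values of phi
  have hval : ∀ (p : (W.H1.V → ℤ) × (W.H2.V → ℤ)) (x : G.V), phi p x =
      (if h : x ∈ W.V1 then p.1 ⟨x, h⟩ else 0) + (if h : x ∈ W.V2 then p.2 ⟨x, h⟩ else 0) :=
    fun p x => by rw [hphi]; rfl
  have hsurj : Function.Surjective phi := by
    intro D
    refine ⟨(fun x => D x.1, fun x => if x.1 = W.v then 0 else D x.1), ?_⟩
    funext x
    rw [hval]
    by_cases h1 : x ∈ W.V1
    · by_cases h2 : x ∈ W.V2
      · have h3 := hint x h1 h2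
        subst h3
        simp [W.hv1, W.hv2]
      · simp [h1, h2]
    · have h2 := (hcov x).resolve_left h1
      have h3 : x ≠ W.v := fun h => h1 (h ▸ W.hv1)
      simp [h1, h2, h3]
  have hgen : phi (d1, -d2) = 0 := by
    funext x
    rw [hval]
    by_cases hx : x = W.v
    · subst hx
      simp only [W.hv1, W.hv2, dite_true]
      change d1 ⟨W.v, W.hv1⟩ + -(d2 ⟨W.v, W.hv2⟩) = 0
      rw [hd1v, hd2v]; rfl
    · have a1 : (if h : x ∈ W.V1 then d1 ⟨x, h⟩ else 0) = 0 := by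
        split_ifs with h
        · exact hd1n x h hx
        · rfl
      have a2 : (if h : x ∈ W.V2 then (-d2) ⟨x, h⟩ else 0) = 0 := by
        split_ifs with h
        · change -(d2 ⟨x, h⟩) = 0
          rw [hd2n x h hx, neg_zero]
        · rfl
      rw [a1, a2]; rfl
  have hkerel : ∀ p, phi p = 0 → p = p.1 ⟨W.v, W.hv1⟩ • ((d1, -d2) : (W.H1.V → ℤ) × (W.H2.V → ℤ)) := by
    intro p hp
    have hp' : ∀ x, (if h : x ∈ W.V1 then p.1 ⟨x, h⟩ else 0) +
        (if h : x ∈ W.V2 then p.2 ⟨x, h⟩ else 0) = 0 := fun x => by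
      rw [← hval, hp]; rfl
    refine Prod.ext ?_ ?_
    · funext ⟨x, hx⟩
      change p.1 ⟨x, hx⟩ = p.1 ⟨W.v, W.hv1⟩ * d1 ⟨x, hx⟩
      by_cases h : x = W.v
      · subst h; rw [hd1v, mul_one]
      · rw [hd1n x hx h, mul_zero]
        have h2 : x ∉ W.V2 := fun h2 => h (hint x hx h2)
        have := hp' x
        simpa only [hx, h2, dite_true, dite_false, add_zero] using this
    · funext ⟨x, hx⟩
      change p.2 ⟨x, hx⟩ = p.1 ⟨W.v, W.hv1⟩ * -(d2 ⟨x, hx⟩)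
      have := hp' x
      by_cases h : x = W.v
      · subst h; rw [hd2v]
        simp only [W.hv1, W.hv2, dite_true] at this
        linarith
      · rw [hd2n x hx h, neg_zero, mul_zero]
        have h2 : x ∉ W.V1 := fun h2 => h (hint x h2 hx)
        simpa only [hx, h2, dite_true, dite_false, zero_add] using this
  have hker : phi.ker = AddSubgroup.zmultiples ((d1, -d2) : (W.H1.V → ℤ) × (W.H2.V → ℤ)) := by
    ext p
    rw [AddMonoidHom.mem_ker, AddSubgroup.mem_zmultiples_iff]
    constructor
    · intro h; exact ⟨_, (hkerel p h).symm⟩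
    · rintro ⟨n, rfl⟩
      rw [map_zsmul, hgen, smul_zero]
  have hnd : ∀ n : ℤ, n • d1 ∈ W.H1.Prin → n = 0 := by
    intro n hn
    have := degree_Prin _ _ hn
    simpa [← Finset.mul_sum, hdeg1] using this
  have hinj : Function.Injective (fun n : ℤ => n • ((d1, -d2) : (W.H1.V → ℤ) × (W.H2.V → ℤ))) := by
    intro m n h
    have := congrFun (congrArg Prod.fst h) ⟨W.v, W.hv1⟩
    change m * d1 ⟨W.v, W.hv1⟩ = n * d1 ⟨W.v, W.hv1⟩ at this
    simpa [hd1v] using this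
  have hT1 : ∀ u (hu : u ∈ W.V1) w, G.iota W.V1 (W.H1.T ⟨u, hu⟩) w =
      -∑ e ∈ W.E1, G.bd e u * G.bd e w := fun u hu w => G.iota_T W.V1 W.E1 W.ends1 u hu w
  have hT2 : ∀ u (hu : u ∈ W.V2) w, G.iota W.V2 (W.H2.T ⟨u, hu⟩) w =
      -∑ e ∈ W.E2, G.bd e u * G.bd e w := fun u hu w => G.iota_T W.V2 W.E2 W.ends2 u hu w
  have hsplit : ∀ u w, G.T u w = -∑ e ∈ W.E1, G.bd e u * G.bd e w +
      -∑ e ∈ W.E2, G.bd e u * G.bd e w := by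
    intro u w
    rw [T_eq, ← W.cover_E, Finset.sum_union (Finset.disjoint_iff_inter_eq_empty.2 W.disj_E), neg_add]
  have hmap : AddSubgroup.map phi ((W.H1.Prin).prod W.H2.Prin) = G.Prin := by
    apply le_antisymm
    · rintro _ ⟨p, hp, rfl⟩
      rw [hphi]
      obtain ⟨hp1, hp2⟩ := AddSubgroup.mem_prod.1 hp
      refine G.Prin.add_mem ?_ ?_
      · refine G.iota_Prin W.V1 W.E1 W.ends1 W.v W.hv1 ?_ p.1 hp1
        intro u hu hne e he
        exact G.bd_zero W.V2 W.E2 W.ends2 u (fun h => hne (hint u hu h)) e ((hcovE e).resolve_left he)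
      · refine G.iota_Prin W.V2 W.E2 W.ends2 W.v W.hv2 ?_ p.2 hp2
        intro u hu hne e he
        exact G.bd_zero W.V1 W.E1 W.ends1 u (fun h => hne (hint u h hu)) e ((hcovE e).resolve_right he)
    · refine (AddSubgroup.closure_le _).2 ?_
      rintro _ ⟨u, rfl⟩
      refine ⟨(if h : u ∈ W.V1 then W.H1.T ⟨u, h⟩ else 0,
        if h : u ∈ W.V2 then W.H2.T ⟨u, h⟩ else 0), AddSubgroup.mem_prod.2 ⟨?_, ?_⟩, ?_⟩
      · dsimp only
        split_ifs with h
        · exact AddSubgroup.subset_closure ⟨_, rfl⟩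
        · exact AddSubgroup.zero_mem _
      · dsimp only
        split_ifs with h
        · exact AddSubgroup.subset_closure ⟨_, rfl⟩
        · exact AddSubgroup.zero_mem _
      · rw [hphi]
        funext w
        rw [hsplit, Pi.add_apply]
        congr 1
        · dsimp only
          split_ifs with h
          · exact hT1 u h w
          · rw [Finset.sum_eq_zero fun e he => by
              rw [G.bd_zero W.V1 W.E1 W.ends1 u h e he, zero_mul]]
            exact congrFun (map_zero (G.iotaHom W.V1)) w
        · dsimp only
          split_ifs with h
          · exact hT2 u h w
          · rw [Finset.sum_eq_zero fun e he => by
              rw [G.bd_zero W.V2 W.E2 W.ends2 u h e he, zero_mul]]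
            exact congrFun (map_zero (G.iotaHom W.V2)) w
  refine ⟨hsurj, hker, hinj, hmap, ?_, ?_⟩
  · intro p hp h0
    have h1 := hkerel p h0
    have h2 := (AddSubgroup.mem_prod.1 hp).1
    have h3 : p.1 = p.1 ⟨W.v, W.hv1⟩ • d1 := congrArg Prod.fst h1
    rw [h3] at h2
    rw [h1, hnd _ h2, zero_smul]
  · intro psi hpsi
    refine ⟨?_, ?_⟩
    · intro y
      obtain ⟨D, rfl⟩ := QuotientAddGroup.mk_surjective y
      obtain ⟨p, rfl⟩ := hsurj D
      exact ⟨_, hpsi p.1 p.2⟩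
    · intro alpha halpha
      have hal : ∀ n : ℤ, alpha n = n • ((QuotientAddGroup.mk d1, QuotientAddGroup.mk (-d2)) :
          W.H1.Jac × W.H2.Jac) := by
        intro n
        rw [← halpha, ← map_zsmul, smul_eq_mul, mul_one]
      refine ⟨?_, ?_⟩
      · rw [injective_iff_map_eq_zero]
        intro n hn
        rw [hal] at hn
        have h1 : ((n • d1 : W.H1.V → ℤ) : W.H1.Jac) = 0 := congrArg Prod.fst hn
        exact hnd n ((QuotientAddGroup.eq_zero_iff _).1 h1)
      · ext ⟨a, b⟩
        rw [AddMonoidHom.mem_ker, AddMonoidHom.mem_range]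
        constructor
        · rintro ⟨n, hn⟩
          rw [← hn, hal, map_zsmul, hpsi, hgen, QuotientAddGroup.mk_zero, smul_zero]
        · obtain ⟨D1, rfl⟩ := QuotientAddGroup.mk_surjective a
          obtain ⟨D2, rfl⟩ := QuotientAddGroup.mk_surjective b
          intro h
          rw [hpsi, QuotientAddGroup.eq_zero_iff, ← hmap] at h
          obtain ⟨p, hp, hpe⟩ := h
          have h0 : phi ((D1, D2) - p) = 0 := by rw [map_sub, hpe, sub_self]
          have h1 := hkerel _ h0
          generalize ((D1, D2) - p).1 ⟨W.v, W.hv1⟩ = n at h1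
          obtain ⟨hp1, hp2⟩ := AddSubgroup.mem_prod.1 hp
          refine ⟨n, ?_⟩
          rw [hal]
          have e1 : D1 - p.1 = n • d1 := congrArg Prod.fst h1
          have e2 : D2 - p.2 = n • (-d2) := congrArg Prod.snd h1
          refine Prod.ext ?_ ?_
          · change ((n • d1 : W.H1.V → ℤ) : W.H1.Jac) = (D1 : W.H1.Jac)
            rw [← e1, QuotientAddGroup.eq]
            simpa using hp1
          · change ((n • (-d2) : W.H2.V → ℤ) : W.H2.Jac) = (D2 : W.H2.Jac)
            rw [← e2, QuotientAddGroup.eq]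
            simpa using hp2
end

section
/- Let G be a connected graph with a cut vertex and let G = H₁ ∨ H₂ be a corresponding decomposition. For j = 1, 2, the natural inclusion Div(H_j) → Div(G) (extending a divisor by zero outside H_j) maps Prin(H_j) into Prin(G) and induces an injective homomorphism Jac(H_j) → Jac(G). -/
namespace Multigraph

/-- Edge-wise Laplacian over a set of edges. -/
def lapOn (G : Multigraph) (S : Finset G.E) (f : G.V → ℤ) (w : G.V) : ℤ :=
  ∑ e ∈ S, (f (G.ends e).2 - f (G.ends e).1) *
    ((if (G.ends e).1 = w then 1 else 0) - (if (G.ends e).2 = w then 1 else 0))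

theorem T_eq_s1 (G : Multigraph) (v w : G.V) :
    G.T v w = G.lapOn Finset.univ (fun x => if x = v then 1 else 0) w := by
  unfold T inter lapOn
  split_ifs with h
  · subst h
    unfold valency numLoops
    rw [Finset.card_filter]
    push_cast
    rw [← Finset.sum_neg_distrib, Finset.mul_sum, ← Finset.sum_add_distrib]
    refine Finset.sum_congr rfl fun e _ => ?_
    rcases hh : G.ends e with ⟨a, b⟩
    by_cases h1 : a = v <;> by_cases h2 : b = v <;> simp [h1, h2]
  · unfold numEdges
    rw [Finset.card_filter]
    push_cast
    refine Finset.sum_congr rfl fun e _ => ?_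
    rcases hh : G.ends e with ⟨a, b⟩
    by_cases h1 : a = v <;> by_cases h2 : b = v <;> by_cases h3 : a = w <;>
      by_cases h4 : b = w <;> simp_all

theorem lapOn_add (G : Multigraph) (S : Finset G.E) (f g : G.V → ℤ) :
    G.lapOn S (f + g) = G.lapOn S f + G.lapOn S g := by
  funext w
  simp only [lapOn, Pi.add_apply, ← Finset.sum_add_distrib]
  exact Finset.sum_congr rfl fun e _ => by ring

/-- The Laplacian as a homomorphism. -/
def lapHom (G : Multigraph) : (G.V → ℤ) →+ (G.V → ℤ) :=
  AddMonoidHom.mk' (G.lapOn Finset.univ) (G.lapOn_add Finset.univ)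

theorem mem_Prin (G : Multigraph) (D : G.V → ℤ) :
    D ∈ G.Prin ↔ ∃ f, G.lapOn Finset.univ f = D := by
  have hT : ∀ v, G.T v = G.lapHom (fun x => if x = v then 1 else 0) := fun v =>
    funext fun w => G.T_eq_s1 v w
  constructor
  · intro h
    have : G.Prin ≤ G.lapHom.range := by
      unfold Prin
      rw [AddSubgroup.closure_le]
      rintro _ ⟨v, rfl⟩
      exact ⟨_, (hT v).symm⟩
    exact this h
  · rintro ⟨f, rfl⟩
    have hf : f = ∑ v, f v • (fun x => if x = v then (1 : ℤ) else 0) := by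
      funext x
      simp
    change G.lapHom f ∈ G.Prin
    rw [hf, map_sum]
    refine AddSubgroup.sum_mem _ fun v _ => ?_
    rw [map_zsmul, ← hT]
    exact AddSubgroup.zsmul_mem _ (AddSubgroup.subset_closure (Set.mem_range_self v)) _

theorem lapOn_subgraph (G : Multigraph) (Vs : Finset G.V) (Es : Finset G.E)
    (h : ∀ e ∈ Es, (G.ends e).1 ∈ Vs ∧ (G.ends e).2 ∈ Vs) (f : G.V → ℤ)
    (x : {x : G.V // x ∈ Vs}) :
    (G.subgraph Vs Es h).lapOn Finset.univ (fun y : {x : G.V // x ∈ Vs} => f y.1) x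
      = G.lapOn Es f x.1 := by
  unfold lapOn
  rw [← Finset.sum_coe_sort Es]
  refine Finset.sum_congr rfl fun e _ => ?_
  have h1 : ((G.subgraph Vs Es h).ends e).1 = x ↔ (G.ends e.1).1 = x.1 := Subtype.ext_iff
  have h2 : ((G.subgraph Vs Es h).ends e).2 = x ↔ (G.ends e.1).2 = x.1 := Subtype.ext_iff
  simp only [h1, h2]
  rfl

theorem lapOn_off (G : Multigraph) (Vs : Finset G.V) (Es : Finset G.E)
    (h : ∀ e ∈ Es, (G.ends e).1 ∈ Vs ∧ (G.ends e).2 ∈ Vs) (f : G.V → ℤ)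
    (x : G.V) (hx : x ∉ Vs) : G.lapOn Es f x = 0 := by
  refine Finset.sum_eq_zero fun e he => ?_
  have h1 : (G.ends e).1 ≠ x := fun hh => hx (hh ▸ (h e he).1)
  have h2 : (G.ends e).2 ≠ x := fun hh => hx (hh ▸ (h e he).2)
  simp [h1, h2]

theorem lapOn_sum (G : Multigraph) (S : Finset G.E) (f : G.V → ℤ) :
    ∑ w, G.lapOn S f w = 0 := by
  unfold lapOn
  rw [Finset.sum_comm]
  refine Finset.sum_eq_zero fun e _ => ?_
  rw [← Finset.mul_sum, Finset.sum_sub_distrib]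
  simp

theorem wedge_side (G : Multigraph) (v : G.V) (Vs Vt : Finset G.V) (Es Et : Finset G.E)
    (hvs : v ∈ Vs) (hV : Vs ∩ Vt = {v})
    (hE : Es ∪ Et = Finset.univ) (hd : Es ∩ Et = ∅)
    (hs : ∀ e ∈ Es, (G.ends e).1 ∈ Vs ∧ (G.ends e).2 ∈ Vs)
    (ht : ∀ e ∈ Et, (G.ends e).1 ∈ Vt ∧ (G.ends e).2 ∈ Vt) 
    (D : {x : G.V // x ∈ Vs} → ℤ) :
    G.iota Vs D ∈ G.Prin ↔ D ∈ (G.subgraph Vs Es hs).Prin := by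
  have huniq : ∀ x, x ∈ Vs → x ∈ Vt → x = v := fun x h1 h2 => by
    have : x ∈ Vs ∩ Vt := Finset.mem_inter.2 ⟨h1, h2⟩
    rw [hV] at this
    simpa using this
  have hsplit : ∀ f w, G.lapOn Finset.univ f w = G.lapOn Es f w + G.lapOn Et f w := by
    intro f w
    unfold lapOn
    rw [← hE, Finset.sum_union (Finset.disjoint_iff_inter_eq_empty.2 hd)]
  refine (mem_Prin G _).trans (Iff.trans ?_ (mem_Prin (G.subgraph Vs Es hs) D).symm)
  constructor
  · rintro ⟨f, hf⟩
    have hB : ∀ w, w ≠ v → G.lapOn Et f w = 0 := by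
      intro w hw
      by_cases hwt : w ∈ Vt
      · have hws : w ∉ Vs := fun h => hw (huniq w h hwt)
        have h1 := congrFun hf w
        rw [hsplit, G.lapOn_off Vs Es hs f w hws] at h1
        simpa [iota, hws] using h1
      · exact G.lapOn_off Vt Et ht f w hwt
    have hBv : G.lapOn Et f v = 0 := by
      have := G.lapOn_sum Et f
      rwa [Finset.sum_eq_single v (fun w _ hw => hB w hw) (by simp)] at this
    refine ⟨fun y : {x : G.V // x ∈ Vs} => f y.1, funext fun x => ?_⟩
    rw [lapOn_subgraph G Vs Es hs f x]
    have h1 := congrFun hf x.1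
    have h2 : G.lapOn Et f x.1 = 0 := by
      by_cases hx : x.1 = v
      · rw [hx, hBv]
      · exact hB _ hx
    have h3 : G.iota Vs D x.1 = D x := by
      unfold iota
      rw [dif_pos x.2]
      rfl
    rw [hsplit, h2, add_zero, h3] at h1
    exact h1
  · rintro ⟨g, hg⟩
    let f : G.V → ℤ := fun x => if h : x ∈ Vs then g ⟨x, h⟩ else g ⟨v, hvs⟩
    have hfg : g = fun y : {x : G.V // x ∈ Vs} => f y.1 := by
      funext y
      have hy : f y.1 = g ⟨y.1, y.2⟩ := dif_pos y.2
      exact hy.symm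
    have hft : ∀ x ∈ Vt, f x = g ⟨v, hvs⟩ := by
      intro x hx
      by_cases h : x ∈ Vs
      · obtain rfl := huniq x h hx
        exact dif_pos h
      · exact dif_neg h
    refine ⟨f, funext fun w => ?_⟩
    have h0 : G.lapOn Et f w = 0 := by
      refine Finset.sum_eq_zero fun e he => ?_
      rw [hft _ (ht e he).1, hft _ (ht e he).2]
      simp
    rw [hsplit, h0, add_zero]
    by_cases hw : w ∈ Vs
    · unfold iota
      rw [dif_pos hw, ← hg, hfg]
      exact (lapOn_subgraph G Vs Es hs f ⟨w, hw⟩).symm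
    · unfold iota
      rw [dif_neg hw]
      exact G.lapOn_off Vs Es hs f w hw

theorem iota_sub (G : Multigraph) (Vs : Finset G.V) (D D' : {x : G.V // x ∈ Vs} → ℤ) :
    G.iota Vs D - G.iota Vs D' = G.iota Vs (D - D') := by
  funext x
  by_cases h : x ∈ Vs <;> simp [iota, h]

end Multigraph

open Multigraph in
/-- For a cut-vertex decomposition `G = H₁ ∨ H₂` of a connected graph,
extension by zero `Div(H_j) → Div(G)` maps `Prin(H_j)` into `Prin(G)` and induces an
injective homomorphism `Jac(H_j) → Jac(G)`. -/
theorem wedge_jacobian_injective (G : Multigraph) (hG : G.Connected) (W : G.Wedge) :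
    (∀ D ∈ W.H1.Prin, G.iota W.V1 D ∈ G.Prin) ∧
    (∀ D ∈ W.H2.Prin, G.iota W.V2 D ∈ G.Prin) ∧
    (∀ D D' : W.H1.V → ℤ, G.iota W.V1 D - G.iota W.V1 D' ∈ G.Prin → D - D' ∈ W.H1.Prin) ∧
    (∀ D D' : W.H2.V → ℤ, G.iota W.V2 D - G.iota W.V2 D' ∈ G.Prin → D - D' ∈ W.H2.Prin) := by
  have h1 := G.wedge_side W.v W.V1 W.V2 W.E1 W.E2 W.hv1 W.inter_V W.cover_E W.disj_E
    W.ends1 W.ends2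
  have h2 := G.wedge_side W.v W.V2 W.V1 W.E2 W.E1 W.hv2
    (by rw [Finset.inter_comm]; exact W.inter_V) (by rw [Finset.union_comm]; exact W.cover_E)
    (by rw [Finset.inter_comm]; exact W.disj_E) W.ends2 W.ends1
  refine ⟨fun D hD => (h1 D).2 hD, fun D hD => (h2 D).2 hD, fun D D' h => ?_, fun D D' h => ?_⟩
  · exact (h1 _).1 (G.iota_sub W.V1 D D' ▸ h)
  · exact (h2 _).1 (G.iota_sub W.V2 D D' ▸ h)
end

section
/- Let G be a connected graph with a cut vertex and corresponding decomposition G = H₁ ∨ H₂, let m, n be nonnegative integers, and let G^{(m,n)} = H₁^{(m)} ∨ H₂^{(n)} be the refinement of G obtained by inserting m vertices in the interior of every edge of H₁ and n vertices in the interior of every edge of H₂. Then the natural map σ*_{m,n}: Div(G) → Div(G^{(m,n)}) maps Prin(G) into Prin(G^{(m,n)}). -/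
namespace Multigraph

/-- The (negative) Laplacian, written edge by edge. -/
def lap (G : Multigraph) (f : G.V → ℤ) : G.V → ℤ := fun w =>
  ∑ e : G.E, (f (G.ends e).1 - f (G.ends e).2) *
    ((if (G.ends e).2 = w then 1 else 0) - (if (G.ends e).1 = w then 1 else 0))

theorem T_eq_lap (G : Multigraph) (v : G.V) :
    G.T v = G.lap (fun x => if x = v then 1 else 0) := by
  funext w
  unfold T lap inter
  split_ifs with h
  · subst h
    simp only [valency, numLoops, Finset.card_filter]
    push_cast
    rw [Finset.mul_sum, ← Finset.sum_neg_distrib, ← Finset.sum_add_distrib]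
    refine Finset.sum_congr rfl fun e _ => ?_
    rcases G.ends e with ⟨a, b⟩
    by_cases ha : a = v <;> by_cases hb : b = v <;> simp [ha, hb]
  · simp only [numEdges, Finset.card_filter]
    push_cast
    refine Finset.sum_congr rfl fun e _ => ?_
    rcases G.ends e with ⟨a, b⟩
    have h' : ¬ w = v := fun t => h t.symm
    by_cases ha : a = v <;> by_cases hb : b = v <;> by_cases ha' : a = w <;>
      by_cases hb' : b = w <;> simp_all

theorem lap_eq_sum (G : Multigraph) (f : G.V → ℤ) :
    G.lap f = ∑ v, f v • G.T v := by
  funext w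
  simp only [T_eq_lap, Finset.sum_apply, Pi.smul_apply, lap, smul_eq_mul, Finset.mul_sum]
  rw [Finset.sum_comm]
  refine Finset.sum_congr rfl fun e _ => ?_
  simp only [← mul_assoc, ← Finset.sum_mul, mul_sub, Finset.sum_sub_distrib]
  simp

theorem lap_mem (G : Multigraph) (f : G.V → ℤ) : G.lap f ∈ G.Prin := by
  rw [lap_eq_sum]
  exact sum_mem fun v _ => zsmul_mem (AddSubgroup.subset_closure (Set.mem_range_self v)) _

/-- An old vertex in the refinement. -/
def oldV (G : Multigraph) (k : G.E → ℕ) (a : G.V) : (G.subdivide k).V :=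
  (Sum.inl a : G.V ⊕ (Σ e : G.E, Fin (k e)))

/-- A new vertex in the refinement. -/
def newV (G : Multigraph) (k : G.E → ℕ) (p : Σ e : G.E, Fin (k e)) : (G.subdivide k).V :=
  (Sum.inr p : G.V ⊕ (Σ e : G.E, Fin (k e)))

theorem cases_V (G : Multigraph) (k : G.E → ℕ) (w : (G.subdivide k).V) :
    (∃ a, w = G.oldV k a) ∨ (∃ p, w = G.newV k p) := by
  rcases w with w | w
  · exact Or.inl ⟨w, rfl⟩
  · exact Or.inr ⟨w, rfl⟩

theorem oldV_inj (G : Multigraph) (k : G.E → ℕ) (a b : G.V) :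
    G.oldV k a = G.oldV k b ↔ a = b := Sum.inl_injective.eq_iff

theorem oldV_new (G : Multigraph) (k : G.E → ℕ) (a : G.V) (p : Σ e : G.E, Fin (k e)) :
    G.oldV k a = G.newV k p ↔ False := ⟨fun h => Sum.inl_ne_inr h, False.elim⟩

/-- The `i`-th vertex on the subdivided edge `e`. -/
def pathV (G : Multigraph) (k : G.E → ℕ) (e : G.E) (i : ℕ) : (G.subdivide k).V :=
  if i = 0 then G.oldV k (G.ends e).1
  else if h : i - 1 < k e then G.newV k ⟨e, ⟨i - 1, h⟩⟩ else G.oldV k (G.ends e).2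

theorem pathV_zero (G : Multigraph) (k : G.E → ℕ) (e : G.E) (i : ℕ) (h : i = 0) :
    G.pathV k e i = G.oldV k (G.ends e).1 := if_pos h

theorem pathV_mid (G : Multigraph) (k : G.E → ℕ) (e : G.E) (i : ℕ) (h : i ≠ 0)
    (h' : i - 1 < k e) : G.pathV k e i = G.newV k ⟨e, ⟨i - 1, h'⟩⟩ :=
  (if_neg h).trans (dif_pos h')

theorem pathV_last (G : Multigraph) (k : G.E → ℕ) (e : G.E) (i : ℕ) (h : i ≠ 0)
    (h' : ¬ i - 1 < k e) : G.pathV k e i = G.oldV k (G.ends e).2 :=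
  (if_neg h).trans (dif_neg h')

theorem ends_fst (G : Multigraph) (k : G.E → ℕ) (e : G.E) (i : Fin (k e + 1)) :
    ((G.subdivide k).ends ⟨e, i⟩).1 = G.pathV k e i := by
  have := i.isLt
  by_cases h : (i : ℕ) = 0
  · rw [pathV_zero _ _ _ _ h]
    exact dif_pos h
  · rw [pathV_mid _ _ _ _ h (by omega)]
    exact dif_neg h

theorem ends_snd (G : Multigraph) (k : G.E → ℕ) (e : G.E) (i : Fin (k e + 1)) :
    ((G.subdivide k).ends ⟨e, i⟩).2 = G.pathV k e (i + 1) := by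
  have := i.isLt
  by_cases h : (i : ℕ) = k e
  · rw [pathV_last _ _ _ _ (by omega) (by omega)]
    exact dif_pos h
  · rw [pathV_mid _ _ _ _ (by omega) (by omega)]
    exact dif_neg h

/-- Linear interpolation. -/
def interp (G : Multigraph) (k : G.E → ℕ) (f F : G.V → ℤ) : (G.subdivide k).V → ℤ :=
  Sum.elim F fun p => F (G.ends p.1).1 + ((p.2 : ℕ) + 1) * (f (G.ends p.1).2 - f (G.ends p.1).1)

theorem interp_path (G : Multigraph) (k : G.E → ℕ) (f F : G.V → ℤ)
    (hF : ∀ e, F (G.ends e).2 - F (G.ends e).1 = (k e + 1) * (f (G.ends e).2 - f (G.ends e).1))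
    (e : G.E) (i : ℕ) (hi : i ≤ k e + 1) :
    G.interp k f F (G.pathV k e i) =
      F (G.ends e).1 + i * (f (G.ends e).2 - f (G.ends e).1) := by
  have ho : ∀ a, G.interp k f F (G.oldV k a) = F a := fun _ => rfl
  have hn : ∀ p, G.interp k f F (G.newV k p) = F (G.ends p.1).1 +
    ((p.2 : ℕ) + 1) * (f (G.ends p.1).2 - f (G.ends p.1).1) := fun _ => rfl
  unfold pathV
  split_ifs with h1 h2
  · simp [h1, ho]
  · rw [hn]
    have : ((i - 1 : ℕ) : ℤ) + 1 = i := by omega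
    simp only [this]
  · obtain rfl : i = k e + 1 := by omega
    have := hF e
    push_cast
    rw [ho]
    linarith

theorem subdiv_lap (G : Multigraph) (k : G.E → ℕ) (f F : G.V → ℤ)
    (hF : ∀ e, F (G.ends e).2 - F (G.ends e).1 = (k e + 1) * (f (G.ends e).2 - f (G.ends e).1)) :
    G.subdivMap k (G.lap f) = (G.subdivide k).lap (G.interp k f F) := by
  funext w
  have key : (G.subdivide k).lap (G.interp k f F) w =
      ∑ e : G.E, ∑ i : Fin (k e + 1),
        (G.interp k f F ((G.subdivide k).ends ⟨e, i⟩).1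
          - G.interp k f F ((G.subdivide k).ends ⟨e, i⟩).2) *
        ((if ((G.subdivide k).ends ⟨e, i⟩).2 = w then 1 else 0)
          - (if ((G.subdivide k).ends ⟨e, i⟩).1 = w then 1 else 0)) := by
    unfold lap
    exact Fintype.sum_sigma _
  have key2 : ∀ e : G.E, ∑ i : Fin (k e + 1),
        (G.interp k f F ((G.subdivide k).ends ⟨e, i⟩).1
          - G.interp k f F ((G.subdivide k).ends ⟨e, i⟩).2) *
        ((if ((G.subdivide k).ends ⟨e, i⟩).2 = w then 1 else 0)
          - (if ((G.subdivide k).ends ⟨e, i⟩).1 = w then 1 else 0)) =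
      (f (G.ends e).1 - f (G.ends e).2) *
        ((if G.pathV k e (k e + 1) = w then 1 else 0) - (if G.pathV k e 0 = w then 1 else 0)) := by
    intro e
    rw [← Finset.sum_range_sub (fun i => if G.pathV k e i = w then (1 : ℤ) else 0),
      Finset.mul_sum, Finset.sum_range]
    refine Finset.sum_congr rfl fun i _ => ?_
    have := i.isLt
    rw [ends_fst, ends_snd, interp_path G k f F hF e _ (by omega),
      interp_path G k f F hF e _ (by omega)]
    push_cast
    ring
  rw [key, Finset.sum_congr rfl fun e _ => key2 e]
  have h0 : ∀ e, G.pathV k e 0 = G.oldV k (G.ends e).1 := fun e => by simp [pathV]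
  have h1 : ∀ e, G.pathV k e (k e + 1) = G.oldV k (G.ends e).2 := fun e => by simp [pathV]
  simp only [h0, h1]
  rcases G.cases_V k w with ⟨a, rfl⟩ | ⟨p, rfl⟩
  · simp only [oldV_inj]
    rfl
  · simp only [oldV_new, if_false, sub_zero, mul_zero, Finset.sum_const_zero]
    rfl

end Multigraph

open Multigraph in
/-- For a cut-vertex decomposition `G = H₁ ∨ H₂` of a connected graph
and the refinement `G^{(m,n)} = H₁^{(m)} ∨ H₂^{(n)}`, the natural map
`σ*_{m,n} : Div(G) → Div(G^{(m,n)})` maps `Prin(G)` into `Prin(G^{(m,n)})`. -/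
theorem wedge_subdivision_principal (G : Multigraph) (hG : G.Connected) (W : G.Wedge)
    (m n : ℕ) (D : G.V → ℤ) (hD : D ∈ G.Prin) :
    G.subdivMap (fun e => if e ∈ W.E1 then m else n) D
      ∈ (G.subdivide (fun e => if e ∈ W.E1 then m else n)).Prin := by
  have main : ∀ f : G.V → ℤ, G.subdivMap (fun e => if e ∈ W.E1 then m else n) (G.lap f)
      ∈ (G.subdivide (fun e => if e ∈ W.E1 then m else n)).Prin := by
    intro f
    rw [subdiv_lap G _ f
      (fun x => if x ∈ W.V1 then (m + 1) * (f x - f W.v) else (n + 1) * (f x - f W.v))]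
    · exact lap_mem _ _
    · intro e
      by_cases he : e ∈ W.E1
      · have h := W.ends1 e he
        simp only [he, h.1, h.2, if_true]
        ring
      · have he2 : e ∈ W.E2 := by
          have := Finset.mem_univ e
          rw [← W.cover_E, Finset.mem_union] at this
          tauto
        have h := W.ends2 e he2
        have hx : ∀ x ∈ W.V2, (if x ∈ W.V1 then ((m : ℤ) + 1) * (f x - f W.v)
            else (n + 1) * (f x - f W.v)) = (n + 1) * (f x - f W.v) := by
          intro x hx
          split_ifs with h1
          · have : x ∈ W.V1 ∩ W.V2 := Finset.mem_inter.2 ⟨h1, hx⟩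
            rw [W.inter_V, Finset.mem_singleton] at this
            simp [this]
          · rfl
        simp only [hx _ h.1, hx _ h.2, if_neg he]
        ring
  unfold Prin at hD
  induction hD using AddSubgroup.closure_induction with
  | mem x hx =>
    obtain ⟨v, rfl⟩ := hx
    rw [T_eq_lap]
    exact main _
  | zero =>
    convert (G.subdivide (fun e => if e ∈ W.E1 then m else n)).Prin.zero_mem using 1
    funext w
    rcases w with w | w <;> rfl
  | add x y _ _ hx hy =>
    convert add_mem hx hy using 1
    funext w
    rcases w with w | w <;> rfl
  | neg x _ hx =>
    convert neg_mem hx using 1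
    funext w
    rcases w with w | w <;> rfl
end

section
/- Let G be a connected graph with loop-edges e₁, …, e_c. For every tuple n = (n₁, …, n_c) of positive integers, let G^{(n)} be the refinement of G obtained by inserting n_i vertices in the interior of e_i for each i. Then for every divisor D ∈ Div(G), the rank r#_G(D) (defined via the refinement Ĝ inserting one vertex in each loop-edge) equals r_{G^{(n)}}(σ*D), where σ*: Div(G) → Div(G^{(n)}) is the natural map. -/
namespace Multigraph

/-- point mass -/
def dl (G : Multigraph) (v : G.V) : G.V → ℤ := Pi.single v 1

theorem dl_apply (G : Multigraph) (v w : G.V) : G.dl v w = if w = v then 1 else 0 := by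
  simp [dl, Pi.single_apply]

/-- indicator -/
def ind (G : Multigraph) (v w : G.V) : ℤ := if v = w then 1 else 0

theorem T_eq_s6 (G : Multigraph) (v : G.V) :
    G.T v = ∑ e : G.E, (G.ind (G.ends e).1 v - G.ind (G.ends e).2 v) •
      (G.dl (G.ends e).2 - G.dl (G.ends e).1) := by
  funext w
  simp only [T, inter, valency, numLoops, numEdges, Finset.sum_apply, Pi.smul_apply, Pi.sub_apply,
    smul_eq_mul, dl_apply, Finset.card_filter, ind]
  push_cast
  split_ifs with h
  · subst h
    rw [Finset.mul_sum, ← Finset.sum_neg_distrib, ← Finset.sum_add_distrib]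
    refine Finset.sum_congr rfl fun e _ => ?_
    rcases he : G.ends e with ⟨a, b⟩
    simp only [Prod.mk.injEq]
    by_cases h1 : a = v <;> by_cases h2 : b = v <;> simp [h1, h2, eq_comm] <;> grind
  · refine Finset.sum_congr rfl fun e _ => ?_
    rcases he : G.ends e with ⟨a, b⟩
    simp only [Prod.mk.injEq]
    grind

theorem hom_T (G : Multigraph) {A : Type} [AddCommGroup A] (φ : (G.V → ℤ) →+ A) (v : G.V) :
    φ (G.T v) = ∑ e : G.E, (G.ind (G.ends e).1 v - G.ind (G.ends e).2 v) •
      (φ (G.dl (G.ends e).2) - φ (G.dl (G.ends e).1)) := by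
  rw [T_eq_s6, map_sum]
  refine Finset.sum_congr rfl fun e _ => ?_
  rw [map_zsmul, map_sub]

/-- homomorphism determined by the values on vertices -/
def lc (G : Multigraph) {A : Type} [AddCommGroup A] (p : G.V → A) : (G.V → ℤ) →+ A where
  toFun D := ∑ v, D v • p v
  map_zero' := by simp
  map_add' := by intro x y; simp [add_smul, Finset.sum_add_distrib]

theorem lc_apply (G : Multigraph) {A : Type} [AddCommGroup A] (p : G.V → A) (D : G.V → ℤ) :
    G.lc p D = ∑ v, D v • p v := rfl

theorem lc_dl (G : Multigraph) {A : Type} [AddCommGroup A] (p : G.V → A) (v : G.V) :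
    G.lc p (G.dl v) = p v := by
  simp [lc_apply, dl_apply]

theorem eq_sum_dl (G : Multigraph) (D : G.V → ℤ) : D = ∑ v, D v • G.dl v := by
  funext w
  simp [Finset.sum_apply, dl_apply]

theorem hom_eq_lc (G : Multigraph) {A : Type} [AddCommGroup A] (φ : (G.V → ℤ) →+ A)
    (D : G.V → ℤ) : φ D = ∑ v, D v • φ (G.dl v) := by
  conv_lhs => rw [eq_sum_dl G D]
  rw [map_sum]
  simp only [map_zsmul]

theorem hom_Prin (G : Multigraph) {A : Type} [AddCommGroup A] (φ : (G.V → ℤ) →+ A)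
    (K : AddSubgroup A) (h : ∀ v, φ (G.T v) ∈ K) (D : G.V → ℤ) (hD : D ∈ G.Prin) : φ D ∈ K := by
  have : G.Prin ≤ K.comap φ := by
    unfold Prin
    rw [AddSubgroup.closure_le]
    rintro _ ⟨v, rfl⟩
    exact h v
  exact this hD

/-- old vertices -/
def vl (G : Multigraph) (n : G.E → ℕ) (v : G.V) : (G.subdivide n).V := Sum.inl v

/-- new vertices -/
def vr (G : Multigraph) (n : G.E → ℕ) (e : G.E) (j : Fin (n e)) : (G.subdivide n).V :=
  Sum.inr ⟨e, j⟩

/-- case distinction -/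
def el (G : Multigraph) (n : G.E → ℕ) {A : Type} (f : G.V → A) (g : (e : G.E) → Fin (n e) → A) :
    (G.subdivide n).V → A := Sum.elim f (fun y => g y.1 y.2)

theorem el_vl (G : Multigraph) (n : G.E → ℕ) {A : Type} (f : G.V → A)
    (g : (e : G.E) → Fin (n e) → A) (v : G.V) : G.el n f g (G.vl n v) = f v := rfl

theorem el_vr (G : Multigraph) (n : G.E → ℕ) {A : Type} (f : G.V → A)
    (g : (e : G.E) → Fin (n e) → A) (e : G.E) (j : Fin (n e)) :
    G.el n f g (G.vr n e j) = g e j := rfl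

theorem sm_vl (G : Multigraph) (n : G.E → ℕ) (D : G.V → ℤ) (v : G.V) :
    G.subdivMap n D (G.vl n v) = D v := rfl

theorem sm_vr (G : Multigraph) (n : G.E → ℕ) (D : G.V → ℤ) (e : G.E) (j : Fin (n e)) :
    G.subdivMap n D (G.vr n e j) = 0 := rfl

theorem v_cases (G : Multigraph) (n : G.E → ℕ) (x : (G.subdivide n).V) :
    (∃ v, x = G.vl n v) ∨ ∃ e j, x = G.vr n e j := by
  rcases x with v | ⟨e, j⟩
  · exact Or.inl ⟨v, rfl⟩
  · exact Or.inr ⟨e, j, rfl⟩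

theorem vl_inj (G : Multigraph) (n : G.E → ℕ) (v w : G.V) : G.vl n v = G.vl n w ↔ v = w :=
  Sum.inl_injective.eq_iff

theorem vl_ne (G : Multigraph) (n : G.E → ℕ) (v : G.V) (e : G.E) (j : Fin (n e)) :
    G.vl n v ≠ G.vr n e j := by
  intro h; cases h

theorem vr_inj (G : Multigraph) (n : G.E → ℕ) (e e' : G.E) (j : Fin (n e)) (j' : Fin (n e')) :
    G.vr n e j = G.vr n e' j' → e = e' ∧ (j : ℕ) = j' := by
  intro h
  have h3 : (⟨e, j⟩ : Σ e : G.E, Fin (n e)) = ⟨e', j'⟩ := Sum.inr_injective h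
  cases h3
  exact ⟨rfl, rfl⟩

/-- position `k` on the subdivided edge -/
def pos (G : Multigraph) (n : G.E → ℕ) (e : G.E) (k : ℕ) : (G.subdivide n).V :=
  if k = 0 then G.vl n (G.ends e).1
  else if h : k - 1 < n e then G.vr n e ⟨k - 1, h⟩ else G.vl n (G.ends e).2

theorem pos_zero (G : Multigraph) (n : G.E → ℕ) (e : G.E) :
    G.pos n e 0 = G.vl n (G.ends e).1 := by simp [pos]

theorem pos_last (G : Multigraph) (n : G.E → ℕ) (e : G.E) :
    G.pos n e (n e + 1) = G.vl n (G.ends e).2 := by simp [pos]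

theorem pos_mid (G : Multigraph) (n : G.E → ℕ) (e : G.E) (j : Fin (n e)) :
    G.pos n e (j + 1) = G.vr n e j := by simp [pos]

theorem ends_sub (G : Multigraph) (n : G.E → ℕ) (e : G.E) (i : Fin (n e + 1)) :
    (G.subdivide n).ends ⟨e, i⟩ = (G.pos n e i, G.pos n e (i + 1)) := by
  have := i.isLt
  refine Prod.ext ?_ ?_
  · by_cases h : (i : ℕ) = 0
    · rw [h, pos_zero]
      exact dif_pos h
    · have : G.pos n e i = G.vr n e ⟨i - 1, by omega⟩ := by
        rw [pos, if_neg h, dif_pos (by omega)]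
      rw [this]
      exact dif_neg h
  · by_cases h : (i : ℕ) = n e
    · rw [h, pos_last]
      exact dif_pos h
    · refine Eq.trans ?_ (pos_mid G n e ⟨i, by omega⟩).symm
      exact dif_neg h

theorem sum_E (G : Multigraph) (n : G.E → ℕ) {A : Type} [AddCommGroup A]
    (f : (G.subdivide n).V → (G.subdivide n).V → A) :
    ∑ x : (G.subdivide n).E, f ((G.subdivide n).ends x).1 ((G.subdivide n).ends x).2 =
      ∑ e : G.E, ∑ i ∈ Finset.range (n e + 1), f (G.pos n e i) (G.pos n e (i + 1)) := by
  refine (Fintype.sum_sigma (fun x : (Σ e : G.E, Fin (n e + 1)) =>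
    f ((G.subdivide n).ends x).1 ((G.subdivide n).ends x).2)).trans ?_
  refine Finset.sum_congr rfl fun e _ => ?_
  rw [← Fin.sum_univ_eq_sum_range (fun i => f (G.pos n e i) (G.pos n e (i + 1)))]
  refine Finset.sum_congr rfl fun i _ => ?_
  rw [ends_sub]

theorem sum_V (G : Multigraph) (n : G.E → ℕ) {A : Type} [AddCommGroup A]
    (f : (G.subdivide n).V → A) :
    ∑ x : (G.subdivide n).V, f x = ∑ v : G.V, f (G.vl n v) +
      ∑ e : G.E, ∑ j : Fin (n e), f (G.vr n e j) := by
  have h : ∑ x : (G.subdivide n).V, f x = ∑ v : G.V, f (G.vl n v) +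
      ∑ y : (Σ e : G.E, Fin (n e)), f (G.vr n y.1 y.2) :=
    Fintype.sum_sum_type f
  rw [h, Fintype.sum_sigma]

theorem hom_T_sub (G : Multigraph) (n : G.E → ℕ) {A : Type} [AddCommGroup A]
    (φ : ((G.subdivide n).V → ℤ) →+ A) (v : (G.subdivide n).V) :
    φ ((G.subdivide n).T v) = ∑ e : G.E, ∑ i ∈ Finset.range (n e + 1),
      ((G.subdivide n).ind (G.pos n e i) v - (G.subdivide n).ind (G.pos n e (i + 1)) v) •
      (φ ((G.subdivide n).dl (G.pos n e (i + 1))) - φ ((G.subdivide n).dl (G.pos n e i))) := by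
  rw [hom_T]
  exact sum_E G n (fun a b => ((G.subdivide n).ind a v - (G.subdivide n).ind b v) •
      (φ ((G.subdivide n).dl b) - φ ((G.subdivide n).dl a)))

/-- a constant increment along a closed chain contributes zero -/
theorem loop_sum (G : Multigraph) (n : G.E → ℕ) {A : Type} [AddCommGroup A] (b : A)
    (v : (G.subdivide n).V) (e : G.E) (he : G.IsLoop e) (c : ℕ → A)
    (hc : ∀ i ≤ n e, c i = b) :
    ∑ i ∈ Finset.range (n e + 1),
      ((G.subdivide n).ind (G.pos n e i) v - (G.subdivide n).ind (G.pos n e (i + 1)) v) • c i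
      = 0 := by
  have : ∀ i ∈ Finset.range (n e + 1),
      ((G.subdivide n).ind (G.pos n e i) v - (G.subdivide n).ind (G.pos n e (i + 1)) v) • c i
      = ((G.subdivide n).ind (G.pos n e i) v - (G.subdivide n).ind (G.pos n e (i + 1)) v) • b := by
    intro i hi
    rw [hc i (by simp at hi; omega)]
  rw [Finset.sum_congr rfl this, ← Finset.sum_smul,
    Finset.sum_range_sub' (fun i => (G.subdivide n).ind (G.pos n e i) v), pos_zero, pos_last,
    show (G.ends e).1 = (G.ends e).2 from he]
  simp

theorem ind_inl (G : Multigraph) (n : G.E → ℕ) (v w : G.V) :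
    (G.subdivide n).ind (G.vl n v) (G.vl n w) = G.ind v w := by
  unfold ind
  simp only [vl_inj]

theorem ind_inr (G : Multigraph) (n : G.E → ℕ) (v : G.V) (e : G.E) (j : Fin (n e)) :
    (G.subdivide n).ind (G.vl n v) (G.vr n e j) = 0 := by
  unfold ind
  exact if_neg (vl_ne G n v e j)

/-- push-forward on vertices -/
def pv (G : Multigraph) (n : G.E → ℕ) : (G.subdivide n).V → G.V :=
  G.el n id (fun e _ => (G.ends e).1)

theorem pv_pos (G : Multigraph) (n : G.E → ℕ) (e : G.E) (he : G.IsLoop e) (k : ℕ) :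
    G.pv n (G.pos n e k) = (G.ends e).1 := by
  unfold pos
  split_ifs
  · rfl
  · rfl
  · exact he.symm

/-- push-forward of divisors -/
def push (G : Multigraph) (n : G.E → ℕ) : ((G.subdivide n).V → ℤ) →+ (G.V → ℤ) :=
  (G.subdivide n).lc (fun x => G.dl (G.pv n x))

theorem push_Prin (G : Multigraph) (n : G.E → ℕ)
    (hn : ∀ e : G.E, (G.IsLoop e → 1 ≤ n e) ∧ (¬ G.IsLoop e → n e = 0))
    (D : (G.subdivide n).V → ℤ) (hD : D ∈ (G.subdivide n).Prin) : G.push n D ∈ G.Prin := by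
  refine hom_Prin _ (G.push n) _ ?_ D hD
  have key : ∀ (x : (G.subdivide n).V) (e : G.E), ∑ i ∈ Finset.range (n e + 1),
      ((G.subdivide n).ind (G.pos n e i) x - (G.subdivide n).ind (G.pos n e (i + 1)) x) •
      (G.dl (G.pv n (G.pos n e (i + 1))) - G.dl (G.pv n (G.pos n e i))) =
      ((G.subdivide n).ind (G.vl n (G.ends e).1) x - (G.subdivide n).ind (G.vl n (G.ends e).2) x)
        • (G.dl (G.ends e).2 - G.dl (G.ends e).1) := by
    intro x e
    by_cases he : G.IsLoop e
    · have h2 : (G.ends e).1 = (G.ends e).2 := he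
      rw [h2, sub_self, sub_self, zero_smul]
      apply Finset.sum_eq_zero
      intro i _
      rw [pv_pos _ _ _ he, pv_pos _ _ _ he, sub_self, smul_zero]
    · have h0 := (hn e).2 he
      have h1 := pos_last G n e
      rw [h0] at h1
      rw [h0]
      simp only [zero_add] at h1
      simp only [zero_add, Finset.sum_range_one, pos_zero, h1]
      rfl
  intro x
  rw [hom_T_sub]
  simp only [push, lc_dl, key]
  rcases v_cases G n x with ⟨v, rfl⟩ | ⟨e, j, rfl⟩
  · have : ∑ e : G.E, ((G.subdivide n).ind (G.vl n (G.ends e).1) (G.vl n v) -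
      (G.subdivide n).ind (G.vl n (G.ends e).2) (G.vl n v))
        • (G.dl (G.ends e).2 - G.dl (G.ends e).1) = G.T v := by
      rw [T_eq_s6]
      simp only [ind_inl]
    rw [this]
    exact AddSubgroup.subset_closure ⟨v, rfl⟩
  · simp only [ind_inr, sub_self, zero_smul, Finset.sum_const_zero]
    exact zero_mem _

/-- moment -/
def mom (G : Multigraph) (n : G.E → ℕ) (e : G.E) :
    ((G.subdivide n).V → ℤ) →+ ZMod (n e + 1) :=
  (G.subdivide n).lc (G.el n (fun _ => 0) (fun e' j => if e' = e then ((j : ℕ) : ZMod (n e + 1)) + 1 else 0))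

theorem mom_pos (G : Multigraph) (n : G.E → ℕ) (e e' : G.E) (k : ℕ) (hk : k ≤ n e' + 1) :
    G.mom n e ((G.subdivide n).dl (G.pos n e' k)) = if e' = e then (k : ZMod (n e + 1)) else 0 := by
  rw [mom, lc_dl]
  unfold pos
  by_cases h1 : k = 0
  · subst h1
    rw [if_pos rfl, el_vl]
    simp
  rw [if_neg h1]
  by_cases h2 : k - 1 < n e'
  · rw [dif_pos h2, el_vr]
    obtain ⟨m, rfl⟩ := Nat.exists_eq_succ_of_ne_zero h1
    simp
  · rw [dif_neg h2, el_vl]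
    split_ifs with h3
    · subst h3
      have : k = n e' + 1 := by omega
      subst this
      exact (ZMod.natCast_self _).symm
    · rfl

theorem mom_Prin (G : Multigraph) (n : G.E → ℕ) (e : G.E) (he : G.IsLoop e)
    (D : (G.subdivide n).V → ℤ) (hD : D ∈ (G.subdivide n).Prin) : G.mom n e D = 0 := by
  have := hom_Prin _ (G.mom n e) ⊥ ?_ D hD
  · simpa using this
  intro x
  rw [AddSubgroup.mem_bot, hom_T_sub]
  apply Finset.sum_eq_zero
  intro e' _
  by_cases h : e' = e
  · subst h
    apply loop_sum G n 1 x e' he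
      (fun i => G.mom n e' ((G.subdivide n).dl (G.pos n e' (i + 1))) - G.mom n e' ((G.subdivide n).dl (G.pos n e' i)))
    intro i hi
    rw [mom_pos _ _ _ _ _ (by omega), mom_pos _ _ _ _ _ (by omega)]
    simp
  · apply Finset.sum_eq_zero
    intro i hi
    simp at hi
    rw [mom_pos _ _ _ _ _ (by omega), mom_pos _ _ _ _ _ (by omega)]
    simp [h]

/-- class of a vertex -/
def cls (G : Multigraph) (v : G.V) : G.Jac := QuotientAddGroup.mk' G.Prin (G.dl v)

theorem cls_step (G : Multigraph) (n : G.E → ℕ) (e : G.E) (i : ℕ) (hi : i < n e) :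
    (G.subdivide n).cls (G.pos n e (i + 2)) - (G.subdivide n).cls (G.pos n e (i + 1)) =
    (G.subdivide n).cls (G.pos n e (i + 1)) - (G.subdivide n).cls (G.pos n e i) := by
  have h := hom_T_sub G n (QuotientAddGroup.mk' (G.subdivide n).Prin) (G.pos n e (i + 1))
  rw [show QuotientAddGroup.mk' (G.subdivide n).Prin ((G.subdivide n).T (G.pos n e (i+1))) = 0 from
    (QuotientAddGroup.eq_zero_iff _).2 (AddSubgroup.subset_closure ⟨_, rfl⟩)] at h
  have hind : ∀ e' k, k ≤ n e' + 1 → (G.subdivide n).ind (G.pos n e' k) (G.pos n e (i + 1)) =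
      if e' = e ∧ k = i + 1 then 1 else 0 := by
    intro e' k hk
    unfold ind
    congr 1
    rw [eq_iff_iff]
    constructor
    · rw [show G.pos n e (i+1) = G.vr n e ⟨i, hi⟩ from pos_mid G n e ⟨i, hi⟩]
      unfold pos
      split_ifs with h1 h2
      · intro h; exact absurd h (vl_ne _ _ _ _ _)
      · intro h
        obtain ⟨h3, h4⟩ := vr_inj _ _ _ _ _ _ h
        simp at h4
        exact ⟨h3, by omega⟩
      · intro h; exact absurd h (vl_ne _ _ _ _ _)
    · rintro ⟨rfl, rfl⟩; rfl
  change 0 = ∑ e', ∑ k ∈ Finset.range (n e' + 1), _ • ((G.subdivide n).cls (G.pos n e' (k + 1)) -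
    (G.subdivide n).cls (G.pos n e' k)) at h
  rw [Finset.sum_eq_single e] at h
  · have h2 : ∀ k ∈ Finset.range (n e + 1), ((G.subdivide n).ind (G.pos n e k) (G.pos n e (i + 1)) -
        (G.subdivide n).ind (G.pos n e (k + 1)) (G.pos n e (i + 1))) •
        ((G.subdivide n).cls (G.pos n e (k + 1)) - (G.subdivide n).cls (G.pos n e k)) =
        (if k = i + 1 then ((G.subdivide n).cls (G.pos n e (k + 1)) - (G.subdivide n).cls (G.pos n e k)) else 0)
        - (if k = i then ((G.subdivide n).cls (G.pos n e (k + 1)) - (G.subdivide n).cls (G.pos n e k)) else 0) := by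
      intro k hk
      simp only [Finset.mem_range] at hk
      rw [hind e k (by omega), hind e (k+1) (by omega), sub_smul]
      simp [ite_smul]
    rw [Finset.sum_congr rfl h2, Finset.sum_sub_distrib, Finset.sum_ite_eq', Finset.sum_ite_eq',
      if_pos (by simp; omega), if_pos (by simp; omega)] at h
    exact sub_eq_zero.1 h.symm
  · intro e' _ hne
    apply Finset.sum_eq_zero
    intro k hk
    simp only [Finset.mem_range] at hk
    rw [hind e' k (by omega), hind e' (k+1) (by omega)]
    simp [hne]
  · simp

/-- the increment along an edge -/
def inc (G : Multigraph) (n : G.E → ℕ) (e : G.E) : (G.subdivide n).Jac :=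
  (G.subdivide n).cls (G.pos n e 1) - (G.subdivide n).cls (G.pos n e 0)

theorem cls_inc (G : Multigraph) (n : G.E → ℕ) (e : G.E) (i : ℕ) (hi : i ≤ n e) :
    (G.subdivide n).cls (G.pos n e (i + 1)) - (G.subdivide n).cls (G.pos n e i) = G.inc n e := by
  induction i with
  | zero => rfl
  | succ i ih => rw [cls_step _ _ _ _ (by omega), ih (by omega)]

theorem cls_pos (G : Multigraph) (n : G.E → ℕ) (e : G.E) (i : ℕ) (hi : i ≤ n e + 1) :
    (G.subdivide n).cls (G.pos n e i) =
      (G.subdivide n).cls (G.vl n (G.ends e).1) + (i : ℤ) • G.inc n e := by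
  induction i with
  | zero => simp [pos_zero]
  | succ i ih =>
    rw [← sub_add_cancel ((G.subdivide n).cls (G.pos n e (i + 1))) ((G.subdivide n).cls (G.pos n e i)),
      cls_inc _ _ _ _ (by omega), ih (by omega)]
    push_cast
    rw [add_zsmul, one_zsmul]
    abel

theorem inc_torsion (G : Multigraph) (n : G.E → ℕ) (e : G.E) (he : G.IsLoop e) :
    ((n e + 1 : ℕ) : ℤ) • G.inc n e = 0 := by
  have h := cls_pos G n e (n e + 1) le_rfl
  rw [pos_last, ← show (G.ends e).1 = (G.ends e).2 from he] at h
  simpa using h.symm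

/-- the pull-back map on classes -/
def psi (G : Multigraph) (n : G.E → ℕ) : (G.V → ℤ) →+ (G.subdivide n).Jac :=
  G.lc (fun v => (G.subdivide n).cls (G.vl n v))

theorem psi_Prin (G : Multigraph) (n : G.E → ℕ)
    (hn : ∀ e : G.E, (G.IsLoop e → 1 ≤ n e) ∧ (¬ G.IsLoop e → n e = 0))
    (D : G.V → ℤ) (hD : D ∈ G.Prin) : G.psi n D = 0 := by
  have := hom_Prin _ (G.psi n) ⊥ ?_ D hD
  · simpa using this
  intro v
  rw [AddSubgroup.mem_bot, hom_T]
  simp only [psi, lc_dl]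
  have h := hom_T_sub G n (QuotientAddGroup.mk' (G.subdivide n).Prin) (G.vl n v)
  rw [show QuotientAddGroup.mk' (G.subdivide n).Prin ((G.subdivide n).T (G.vl n v)) = 0 from
    (QuotientAddGroup.eq_zero_iff _).2 (AddSubgroup.subset_closure ⟨_, rfl⟩)] at h
  rw [h]
  refine Finset.sum_congr rfl fun e _ => ?_
  by_cases he : G.IsLoop e
  · rw [show (G.ends e).1 = (G.ends e).2 from he, sub_self, zero_smul]
    exact (loop_sum G n (G.inc n e) (G.vl n v) e he
      (fun i => (G.subdivide n).cls (G.pos n e (i + 1)) - (G.subdivide n).cls (G.pos n e i))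
      (fun i hi => cls_inc G n e i hi)).symm
  · have h0 := (hn e).2 he
    have h1 := pos_last G n e
    rw [h0] at h1
    simp only [zero_add] at h1
    rw [h0]
    simp only [zero_add, Finset.sum_range_one, pos_zero, h1, ind_inl]
    rfl

theorem gsum {A ι : Type} [AddCommGroup A] (S : Finset ι) (f : ι → ℤ) (a : A) :
    (∑ i ∈ S, f i) • a = ∑ i ∈ S, f i • a := Finset.sum_smul

theorem mk_eq (G : Multigraph) (n : G.E → ℕ) (E : (G.subdivide n).V → ℤ) :
    QuotientAddGroup.mk' (G.subdivide n).Prin E =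
      G.psi n (fun v => E (G.vl n v)) +
      ∑ e : G.E, ((∑ j : Fin (n e), E (G.vr n e j)) • (G.subdivide n).cls (G.vl n (G.ends e).1)
        + (∑ j : Fin (n e), E (G.vr n e j) * ((j : ℕ) + 1 : ℤ)) • G.inc n e) := by
  rw [hom_eq_lc, sum_V]
  congr 1
  refine Finset.sum_congr rfl fun e _ => ?_
  rw [gsum, gsum, ← Finset.sum_add_distrib]
  refine Finset.sum_congr rfl fun j _ => ?_
  rw [← pos_mid]
  change _ • (G.subdivide n).cls _ = _
  rw [cls_pos _ _ _ _ (by have := j.isLt; omega), zsmul_add, mul_zsmul]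
  push_cast
  rfl

/-- The intrinsic condition, independent of the subdivision. -/
def Qc (G : Multigraph) (D : G.V → ℤ) (r : ℤ) : Prop :=
  ∀ (A : G.V → ℤ) (S : Finset G.E), Effective A → (∀ e ∈ S, G.IsLoop e) →
    degree A + (S.card : ℤ) = r →
    ∃ F : G.V → ℤ, Effective F ∧ D - A - ∑ e ∈ S, (2 : ℤ) • G.dl (G.ends e).1 - F ∈ G.Prin

/-- The condition in the definition of the rank. -/
def Pc (G : Multigraph) (D : G.V → ℤ) (r : ℤ) : Prop :=
  ∀ E : G.V → ℤ, Effective E → degree E = r →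
      ∃ F : G.V → ℤ, Effective F ∧ D - E - F ∈ G.Prin

theorem eff_sum {α ι : Type} (S : Finset ι) (f : ι → α → ℤ) (h : ∀ i ∈ S, Effective (f i)) :
    Effective (∑ i ∈ S, f i) := by
  intro v
  rw [Finset.sum_apply]
  exact Finset.sum_nonneg fun i hi => h i hi v

theorem eff_dl (G : Multigraph) (v : G.V) : Effective (G.dl v) := by
  intro w; rw [dl_apply]; split_ifs <;> simp

theorem deg_dl (G : Multigraph) (v : G.V) : degree (G.dl v) = 1 := by
  simp [degree, dl_apply]

theorem degree_add' (G : Multigraph) (x y : G.V → ℤ) : degree (x + y) = degree x + degree y := by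
  simp [degree, Finset.sum_add_distrib]

theorem degree_sum' (G : Multigraph) {ι : Type} (S : Finset ι) (f : ι → G.V → ℤ) :
    degree (∑ i ∈ S, f i) = ∑ i ∈ S, degree (f i) := by
  simp only [degree, Finset.sum_apply]
  exact Finset.sum_comm

theorem mk_sigma (G : Multigraph) (n : G.E → ℕ) (D : G.V → ℤ) :
    QuotientAddGroup.mk' (G.subdivide n).Prin (G.subdivMap n D) = G.psi n D := by
  rw [mk_eq]
  simp only [sm_vl, sm_vr]
  simp

theorem Q_to_P (G : Multigraph) (n : G.E → ℕ)
    (hn : ∀ e : G.E, (G.IsLoop e → 1 ≤ n e) ∧ (¬ G.IsLoop e → n e = 0)) (D : G.V → ℤ) (r : ℤ)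
    (h : G.Qc D r) : (G.subdivide n).Pc (G.subdivMap n D) r := by
  classical
  intro E hE hdeg
  let d : G.E → ℤ := fun e => ∑ j : Fin (n e), E (G.vr n e j)
  let m : G.E → ℤ := fun e => ∑ j : Fin (n e), E (G.vr n e j) * ((j : ℕ) + 1 : ℤ)
  let S : Finset G.E := Finset.univ.filter fun e => 1 ≤ d e
  let EV : G.V → ℤ := fun v => E (G.vl n v)
  have hd0 : ∀ e, 0 ≤ d e := fun e => Finset.sum_nonneg fun j _ => hE _
  have hS : ∀ e, e ∈ S ↔ 1 ≤ d e := by intro e; simp [S]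
  have hdS : ∀ e, e ∉ S → d e = 0 := by
    intro e he
    have := hd0 e
    rw [hS] at he
    omega
  have hmS : ∀ e, e ∉ S → m e = 0 := by
    intro e he
    have h1 := (Finset.sum_eq_zero_iff_of_nonneg (fun j _ => hE _)).1 (hdS e he)
    refine Finset.sum_eq_zero fun j hj => ?_
    rw [h1 j hj, zero_mul]
  have hSl : ∀ e ∈ S, G.IsLoop e := by
    intro e he
    by_contra hl
    have h0 := (hn e).2 hl
    rw [hS] at he
    have : d e = 0 := by
      have : IsEmpty (Fin (n e)) := by rw [h0]; infer_instance
      simp [d]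
    omega
  have hsum : ∀ {A : Type} [AddCommGroup A] (f : G.E → A), (∀ e, e ∉ S → f e = 0) →
      ∑ e, f e = ∑ e ∈ S, f e := by
    intro A _ f hf
    exact (Finset.sum_subset (Finset.subset_univ S) (fun e _ he => hf e he)).symm
  suffices hmain : Effective (EV + ∑ e ∈ S, (d e - 1) • G.dl (G.ends e).1) ∧
      degree (EV + ∑ e ∈ S, (d e - 1) • G.dl (G.ends e).1) + (S.card : ℤ) = r by
    obtain ⟨F, hF, hFP⟩ := h (EV + ∑ e ∈ S, (d e - 1) • G.dl (G.ends e).1) S hmain.1 hSl hmain.2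
    let k : G.E → ℕ := fun e => ((-m e) % ((n e + 1 : ℕ) : ℤ)).toNat
    have hk0 : ∀ e, (k e : ℤ) = (-m e) % ((n e + 1 : ℕ) : ℤ) := fun e =>
      Int.toNat_of_nonneg (Int.emod_nonneg _ (by positivity))
    have hk1 : ∀ e, k e ≤ n e + 1 := by
      intro e
      have := Int.emod_lt_of_pos (-m e) (show (0 : ℤ) < ((n e + 1 : ℕ) : ℤ) by positivity)
      have := hk0 e
      push_cast at *
      omega
    have hk2 : ∀ e ∈ S, (k e : ℤ) • G.inc n e = - (m e • G.inc n e) := by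
      intro e he
      have h1 := Int.emod_add_mul_ediv (-m e) ((n e + 1 : ℕ) : ℤ)
      rw [hk0, ← neg_smul]
      conv_rhs => rw [← h1]
      rw [add_smul, mul_comm, mul_smul, inc_torsion G n e (hSl e he), smul_zero, add_zero]
    refine ⟨G.subdivMap n F + ∑ e ∈ S, (G.subdivide n).dl (G.pos n e (k e)), ?_, ?_⟩
    · intro x
      rw [Pi.add_apply]
      refine add_nonneg ?_ (eff_sum S _ (fun e _ => eff_dl _ _) x)
      rcases v_cases G n x with ⟨v, rfl⟩ | ⟨e, j, rfl⟩
      · exact hF v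
      · exact le_rfl
    · rw [← QuotientAddGroup.eq_zero_iff]
      change QuotientAddGroup.mk' (G.subdivide n).Prin _ = 0
      have hpsi := psi_Prin G n hn _ hFP
      have hdl : ∀ v, G.psi n (G.dl v) = (G.subdivide n).cls (G.vl n v) := fun v => by
        simp only [psi, lc_dl]
      rw [map_sub, map_sub, map_add, map_sum, mk_sigma, mk_sigma, mk_eq]
      simp only [map_sub, map_add, map_sum, map_zsmul, hdl] at hpsi
      change G.psi n D - (G.psi n EV + ∑ e, (d e • (G.subdivide n).cls (G.vl n (G.ends e).1)
        + m e • G.inc n e)) - (G.psi n F + ∑ e ∈ S, (G.subdivide n).cls (G.pos n e (k e))) = 0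
      rw [hsum _ (by intro e he; rw [hdS e he, hmS e he, zero_smul, zero_smul, add_zero])]
      rw [← hpsi]
      have h3 : ∑ e ∈ S, (d e • (G.subdivide n).cls (G.vl n (G.ends e).1) + m e • G.inc n e)
          + ∑ e ∈ S, (G.subdivide n).cls (G.pos n e (k e)) =
          ∑ e ∈ S, (d e - 1) • (G.subdivide n).cls (G.vl n (G.ends e).1) +
          ∑ e ∈ S, (2 : ℤ) • (G.subdivide n).cls (G.vl n (G.ends e).1) := by
        rw [← Finset.sum_add_distrib, ← Finset.sum_add_distrib]
        refine Finset.sum_congr rfl fun e he => ?_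
        rw [cls_pos _ _ _ _ (hk1 e), hk2 e he, sub_zsmul, one_zsmul, two_zsmul]
        abel
      rw [← sub_eq_zero] at h3 ⊢
      rw [← neg_eq_zero, ← h3]
      abel
  refine ⟨?_, ?_⟩
  · intro v
    rw [Pi.add_apply]
    refine add_nonneg (hE _) (eff_sum S _ (fun e he w => ?_) v)
    rw [Pi.smul_apply, smul_eq_mul]
    rw [hS] at he
    exact mul_nonneg (by omega) (eff_dl _ _ w)
  · rw [← hdeg, degree_add', degree_sum']
    have h1 : ∀ e, degree ((d e - 1) • G.dl (G.ends e).1) = d e - 1 := by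
      intro e
      have := deg_dl G (G.ends e).1
      unfold degree at *
      simp only [Pi.smul_apply, smul_eq_mul]
      rw [← Finset.mul_sum, this, mul_one]
    simp only [h1]
    have h2 : degree E = degree EV + ∑ e, d e := sum_V G n E
    rw [h2, hsum d hdS, Finset.sum_sub_distrib]
    simp
    ring

theorem P_to_Q (G : Multigraph) (n : G.E → ℕ)
    (hn : ∀ e : G.E, (G.IsLoop e → 1 ≤ n e) ∧ (¬ G.IsLoop e → n e = 0)) (D : G.V → ℤ) (r : ℤ)
    (h : (G.subdivide n).Pc (G.subdivMap n D) r) : G.Qc D r := by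
  classical
  intro A S hA hS hdeg
  have hpush : ∀ B, G.push n (G.subdivMap n B) = B := by
    intro B
    conv_rhs => rw [eq_sum_dl G B]
    rw [push, lc_apply, sum_V]
    simp only [sm_vl, sm_vr]
    simp [pv, el_vl]
  have hmom : ∀ e B, G.mom n e (G.subdivMap n B) = 0 := by
    intro e B
    rw [mom, lc_apply, sum_V]
    simp only [sm_vl, sm_vr, el_vl]
    simp
  suffices hmain : Effective (G.subdivMap n A + ∑ e ∈ S, (G.subdivide n).dl (G.pos n e 1)) ∧
      degree (G.subdivMap n A + ∑ e ∈ S, (G.subdivide n).dl (G.pos n e 1)) = r by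
    obtain ⟨F, hF, hFP⟩ := h _ hmain.1 hmain.2
    let d : G.E → ℤ := fun e => ∑ j : Fin (n e), F (G.vr n e j)
    have hd0 : ∀ e, 0 ≤ d e := fun e => Finset.sum_nonneg fun j _ => hF _
    have hd1 : ∀ e ∈ S, 1 ≤ d e := by
      intro e he
      by_contra hlt
      have hde : d e = 0 := by have := hd0 e; omega
      have h1 := (Finset.sum_eq_zero_iff_of_nonneg (fun j _ => hF _)).1 hde
      have h2 := mom_Prin G n e (hS e he) _ hFP
      have h3 : G.mom n e F = 0 := by
        rw [mom, lc_apply, sum_V]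
        simp only [el_vl, el_vr, smul_zero, Finset.sum_const_zero, zero_add]
        refine Finset.sum_eq_zero fun e' _ => Finset.sum_eq_zero fun j _ => ?_
        by_cases hee : e' = e
        · subst hee
          rw [h1 j (Finset.mem_univ _), zero_smul]
        · rw [if_neg hee, smul_zero]
      rw [map_sub, map_sub, map_add, map_sum, hmom, hmom, h3] at h2
      have h4 : ∀ e' ∈ S, G.mom n e ((G.subdivide n).dl (G.pos n e' 1)) = if e' = e then 1 else 0 := by
        intro e' _
        rw [mom_pos _ _ _ _ _ (by omega)]
        simp
      rw [Finset.sum_congr rfl h4, Finset.sum_ite_eq', if_pos he] at h2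
      have : Fact (1 < n e + 1) := ⟨by have := (hn e).1 (hS e he); omega⟩
      simp at h2
    refine ⟨(fun v => F (G.vl n v)) + ∑ e, (d e - if e ∈ S then 1 else 0) • G.dl (G.ends e).1,
      ?_, ?_⟩
    · intro v
      rw [Pi.add_apply]
      refine add_nonneg (hF _) (eff_sum _ _ (fun e _ w => ?_) v)
      rw [Pi.smul_apply, smul_eq_mul]
      refine mul_nonneg ?_ (eff_dl _ _ w)
      split_ifs with he
      · have := hd1 e he; omega
      · have := hd0 e; omega
    · have h1 := push_Prin G n hn _ hFP
      have h2 : G.push n F = (fun v => F (G.vl n v)) + ∑ e, d e • G.dl (G.ends e).1 := by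
        rw [eq_sum_dl G (fun v => F (G.vl n v)), push, lc_apply, sum_V]
        congr 1
        refine Finset.sum_congr rfl fun e _ => ?_
        rw [Finset.sum_smul]
        rfl
      have h3 : ∀ e ∈ S, G.push n ((G.subdivide n).dl (G.pos n e 1)) = G.dl (G.ends e).1 := by
        intro e he
        rw [push, lc_dl, pv_pos _ _ _ (hS e he)]
      rw [map_sub, map_sub, map_add, map_sum, hpush, hpush, h2, Finset.sum_congr rfl h3] at h1
      convert h1 using 1
      simp only [sub_smul, Finset.sum_sub_distrib, ite_smul, one_smul, zero_smul, Finset.sum_ite_mem,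
        Finset.univ_inter, two_smul, Finset.sum_add_distrib]
      abel
  refine ⟨?_, ?_⟩
  · intro x
    rw [Pi.add_apply]
    refine add_nonneg ?_ (eff_sum S _ (fun e _ => eff_dl _ _) x)
    rcases v_cases G n x with ⟨v, rfl⟩ | ⟨e, j, rfl⟩
    · exact hA v
    · exact le_rfl
  · rw [degree_add', degree_sum', ← hdeg]
    simp only [deg_dl]
    congr 1
    · rw [degree, sum_V]
      simp only [sm_vl, sm_vr]
      simp [degree]
    · simp

theorem rank_sub (G : Multigraph) (n : G.E → ℕ)
    (hn : ∀ e : G.E, (G.IsLoop e → 1 ≤ n e) ∧ (¬ G.IsLoop e → n e = 0)) (D : G.V → ℤ) :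
    (G.subdivide n).rank (G.subdivMap n D) = sSup {r : ℤ | r = -1 ∨ (0 ≤ r ∧ G.Qc D r)} := by
  unfold rank
  congr 1
  ext r
  have : (G.subdivide n).Pc (G.subdivMap n D) r ↔ G.Qc D r :=
    ⟨P_to_Q G n hn D r, Q_to_P G n hn D r⟩
  simp only [Set.mem_ofPred_eq, ← this]
  rfl

end Multigraph

open Multigraph in
/-- Let `G` be a connected graph; insert `n e ≥ 1` vertices in the
interior of every loop-edge `e` (and none elsewhere) to obtain the refinement
`G^{(n)}`.  Then `r#_G(D) = r_{G^{(n)}}(σ* D)` for every divisor `D` on `G`. -/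
theorem rankSharp_eq_rank_subdivision (G : Multigraph) (hG : G.Connected) (n : G.E → ℕ)
    (hn : ∀ e : G.E, (G.IsLoop e → 1 ≤ n e) ∧ (¬ G.IsLoop e → n e = 0)) (D : G.V → ℤ) :
    G.rankSharp D = (G.subdivide n).rank (G.subdivMap n D) := by
  rw [rank_sub G n hn D]
  refine rank_sub G _ (fun e => ⟨fun h => ?_, fun h => ?_⟩) D
  · exact (if_pos (c := (G.ends e).1 = (G.ends e).2) h).ge
  · exact if_neg (c := (G.ends e).1 = (G.ends e).2) h
end
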